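/- Let p be an odd prime and h a positive integer. Then the number of pairs (i, j) of natural numbers with 0 ≤ i ≤ j ≤ p^h − 1, C(j, i) ≢ 0 (mod p), and both i and j even, equals (p+1)^h (p^h + 3)/2^{h+2}. -/

import Mathlib

/-!
Averaging over signs, `4 · [i even] · [j even] = (1 + (-1)^i) (1 + (-1)^j)`, so the count is a
quarter of the sum of the four values at `a, b = ±1` of the generating function `∑ a^i b^j` of the
positions `(i, j)` of the binomial coefficients that are nonzero modulo `p`.  By Lucas' theorem this
generating function over the first `p^h` rows is a product over the base-`p` digits, and since
`a^p = a` and `b^p = b` for signs and odd `p`, it is the `h`-th power of its value over the first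
`p` rows.  There every entry with `i ≤ j` is nonzero modulo `p`, and for `p = 2m + 1` the value is
`p (m + 1)` at `(1, 1)` and `m + 1` at the other three sign pairs.
-/

open Finset

lemma sum_range_two_mul_add_one {M : Type*} [AddCommMonoid M] (f : ℕ → M) (m : ℕ) :
    ∑ j ∈ range (2 * m + 1), f j = f 0 + ∑ k ∈ range m, (f (2 * k + 1) + f (2 * k + 2)) := by
  induction m with
  | zero => simp
  | succ m ih =>
    rw [Nat.mul_succ, sum_range_succ, sum_range_succ, ih, sum_range_succ, add_assoc, add_assoc]

lemma four_mul_card_filter_even_and_even {R : Type*} [Ring R] (s : Finset (ℕ × ℕ)) :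
    4 * (#{ij ∈ s | Even ij.1 ∧ Even ij.2} : R) =
      ∑ ij ∈ s, (1 + (-1) ^ ij.1) * (1 + (-1) ^ ij.2) := by
  rw [natCast_card_filter, mul_sum]
  refine sum_congr rfl fun ⟨i, j⟩ _ ↦ ?_
  rcases i.even_or_odd with hi | hi <;> rcases j.even_or_odd with hj | hj <;>
    simp [hi, hj, ← Nat.not_odd_iff_even]
  norm_num

section Lucas

variable {p i j : ℕ}

lemma le_of_not_dvd_choose (h : ¬p ∣ j.choose i) : i ≤ j := by
  contrapose! h
  simp [Nat.choose_eq_zero_of_lt h]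

lemma not_dvd_choose_iff_le (hp : p.Prime) (hj : j < p) : ¬p ∣ j.choose i ↔ i ≤ j := by
  refine ⟨le_of_not_dvd_choose, fun hij hdvd ↦ ?_⟩
  exact (hp.factorization_pos_of_dvd (Nat.choose_pos hij).ne' hdvd).ne'
    (Nat.factorization_choose_eq_zero_of_lt hj)

lemma dvd_choose_iff_dvd_choose_mod_or_div (hp : p.Prime) :
    p ∣ j.choose i ↔ p ∣ (j % p).choose (i % p) ∨ p ∣ (j / p).choose (i / p) := by
  have : Fact p.Prime := ⟨hp⟩
  rw [Choose.choose_modEq_choose_mod_mul_choose_div_nat.dvd_iff dvd_rfl, hp.dvd_mul]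

end Lucas

/-- The positions `(i, j)` of the entries `j.choose i` in the first `N` rows of Pascal's triangle
that are nonzero modulo `p`. Positions with `j < i` drop out because then `j.choose i = 0`. -/
def nonzeroEntries (p N : ℕ) : Finset (ℕ × ℕ) :=
  {ij ∈ range N ×ˢ range N | ¬p ∣ ij.2.choose ij.1}

lemma mem_nonzeroEntries {p N i j : ℕ} :
    (i, j) ∈ nonzeroEntries p N ↔ (i < N ∧ j < N) ∧ ¬p ∣ j.choose i := by
  simp only [nonzeroEntries, mem_filter, mem_product, mem_range]

lemma mem_nonzeroEntries_mul {p N i j : ℕ} (hp : p.Prime) :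
    (i, j) ∈ nonzeroEntries p (p * N) ↔
      (i % p, j % p) ∈ nonzeroEntries p p ∧ (i / p, j / p) ∈ nonzeroEntries p N := by
  simp only [mem_nonzeroEntries, Nat.mod_lt _ hp.pos, Nat.div_lt_iff_lt_mul hp.pos, mul_comm p N,
    dvd_choose_iff_dvd_choose_mod_or_div hp (i := i)]
  tauto

lemma mem_nonzeroEntries_self {p i j : ℕ} (hp : p.Prime) :
    (i, j) ∈ nonzeroEntries p p ↔ j < p ∧ i ≤ j := by
  rw [mem_nonzeroEntries]
  constructor
  · rintro ⟨⟨-, hj⟩, hdvd⟩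
    exact ⟨hj, le_of_not_dvd_choose hdvd⟩
  · rintro ⟨hj, hij⟩
    exact ⟨⟨hij.trans_lt hj, hj⟩, (not_dvd_choose_iff_le hp hj).mpr hij⟩

/-- The generating function of `nonzeroEntries p N`, evaluated at `(a, b)`: `a` marks the position
within a row of Pascal's triangle and `b` marks the row. -/
def pascalSum {R : Type*} [CommSemiring R] (p N : ℕ) (a b : R) : R :=
  ∑ ij ∈ nonzeroEntries p N, a ^ ij.1 * b ^ ij.2

section CommSemiring

variable {R : Type*} [CommSemiring R] {p : ℕ} {a b : R}

lemma pascalSum_mul (hp : p.Prime) (N : ℕ) :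
    pascalSum p (p * N) a b = pascalSum p p a b * pascalSum p N (a ^ p) (b ^ p) := by
  let split (ij : ℕ × ℕ) := ((ij.1 % p, ij.2 % p), (ij.1 / p, ij.2 / p))
  let join (uv : (ℕ × ℕ) × (ℕ × ℕ)) := (uv.1.1 + p * uv.2.1, uv.1.2 + p * uv.2.2)
  have split_join : ∀ uv ∈ nonzeroEntries p p ×ˢ nonzeroEntries p N, split (join uv) = uv := by
    rintro ⟨⟨i₀, j₀⟩, ⟨i₁, j₁⟩⟩ huv
    obtain ⟨⟨hi, hj⟩, -⟩ := mem_nonzeroEntries.mp (mem_product.mp huv).1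
    simp [split, join, Nat.add_mul_div_left _ _ hp.pos, Nat.mod_eq_of_lt, Nat.div_eq_of_lt, hi, hj]
  have join_split (ij : ℕ × ℕ) : join (split ij) = ij := by
    simp only [split, join, Nat.mod_add_div]
  have mem_split (ij : ℕ × ℕ) : ij ∈ nonzeroEntries p (p * N) ↔
      split ij ∈ nonzeroEntries p p ×ˢ nonzeroEntries p N := by
    rw [mem_product, ← Prod.mk.eta (p := ij), mem_nonzeroEntries_mul hp]
  simp only [pascalSum, sum_mul_sum, ← sum_product']
  symm
  refine sum_nbij' join split (fun uv huv ↦ ?_) (fun ij ↦ (mem_split ij).mp) split_join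
    (fun ij _ ↦ join_split ij) fun uv _ ↦ ?_
  · rwa [mem_split, split_join uv huv]
  · simp only [join, pow_add, pow_mul]
    ring

lemma pascalSum_prime_pow (hp : p.Prime) (ha : a ^ p = a) (hb : b ^ p = b) (h : ℕ) :
    pascalSum p (p ^ h) a b = pascalSum p p a b ^ h := by
  induction h with
  | zero => simp [pascalSum, nonzeroEntries, hp.ne_one, filter_singleton]
  | succ h ih => rw [pow_succ', pascalSum_mul hp, ha, hb, ih, pow_succ']

lemma pascalSum_self (hp : p.Prime) :
    pascalSum p p a b = ∑ j ∈ range p, (∑ i ∈ range (j + 1), a ^ i) * b ^ j := by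
  simp only [sum_mul]
  refine sum_finset_product_right _ _ _ fun ⟨i, j⟩ ↦ ?_
  simp only [mem_nonzeroEntries_self hp, mem_range, Nat.lt_succ_iff]

lemma pascalSum_self_one_one {m : ℕ} (hp : (2 * m + 1).Prime) :
    pascalSum (2 * m + 1) (2 * m + 1) (1 : R) 1 = (2 * m + 1) * (m + 1) := by
  have gauss : ∑ j ∈ range (2 * m + 1), (j + 1) = (2 * m + 1) * (m + 1) := by
    have h := sum_range_id_mul_two (2 * m + 2)
    rw [sum_range_succ', add_zero, Nat.add_sub_cancel_right (m := 1)] at h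
    linarith
  simpa [pascalSum_self hp] using congrArg (Nat.cast : ℕ → R) gauss

end CommSemiring

section CommRing

variable {R : Type*} [CommRing R] {m : ℕ}

lemma pascalSum_self_one_neg_one (hp : (2 * m + 1).Prime) :
    pascalSum (2 * m + 1) (2 * m + 1) (1 : R) (-1) = m + 1 := by
  have row_pair (k : ℕ) : ((2 * k + 1 : ℕ) + 1) * (-1 : R) ^ (2 * k + 1) +
      ((2 * k + 2 : ℕ) + 1) * (-1) ^ (2 * k + 2) = 1 := by
    simp only [pow_add, pow_mul, neg_one_sq, one_pow]
    push_cast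
    ring
  have row_sum (j : ℕ) : ∑ i ∈ range (j + 1), (1 : R) ^ i = j + 1 := by simp
  simp only [pascalSum_self hp, row_sum, sum_range_two_mul_add_one, row_pair]
  simp [add_comm]

lemma pascalSum_self_neg_one_left {b : R} (hp : (2 * m + 1).Prime) (hb : b ^ 2 = 1) :
    pascalSum (2 * m + 1) (2 * m + 1) (-1) b = m + 1 := by
  have odd_row (k : ℕ) : ∑ i ∈ range (2 * k + 1 + 1), (-1 : R) ^ i = 0 := by
    rw [neg_one_geom_sum, if_pos (by grind)]
  have even_row (k : ℕ) : ∑ i ∈ range (2 * k + 2 + 1), (-1 : R) ^ i = 1 := by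
    rw [neg_one_geom_sum, if_neg (by grind)]
  have even_pow (k : ℕ) : b ^ (2 * k + 2) = 1 := by
    rw [← Nat.mul_succ, pow_mul, hb, one_pow]
  simp only [pascalSum_self hp, sum_range_two_mul_add_one _ m, odd_row, even_row, even_pow]
  simp [add_comm]

lemma four_mul_card_nonzeroEntries_even_and_even (p N : ℕ) :
    4 * (#{ij ∈ nonzeroEntries p N | Even ij.1 ∧ Even ij.2} : R) =
      pascalSum p N 1 1 + pascalSum p N 1 (-1) + pascalSum p N (-1) 1 +
        pascalSum p N (-1) (-1) := by
  simp only [four_mul_card_filter_even_and_even, pascalSum, ← sum_add_distrib]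
  refine sum_congr rfl fun ij _ ↦ ?_
  ring

end CommRing

/-- For `p` odd, the number of pairs `(i, j)` with `0 ≤ i ≤ j ≤ p^h − 1`, `p ∤ C(j, i)`,
and `i`, `j` both even, equals `(p+1)^h (p^h + 3)/2^(h+2)`. -/
theorem stmt_9 (p h : ℕ) (hp : p.Prime) (hodd : Odd p) (hh : 0 < h) :
    ((Finset.range (p ^ h) ×ˢ Finset.range (p ^ h)).filter
      (fun ij : ℕ × ℕ => ij.1 ≤ ij.2 ∧ ¬ p ∣ Nat.choose ij.2 ij.1 ∧
        Even ij.1 ∧ Even ij.2)).card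
    = (p + 1) ^ h * (p ^ h + 3) / 2 ^ (h + 2) := by
  have drop_le : {ij ∈ range (p ^ h) ×ˢ range (p ^ h) | ij.1 ≤ ij.2 ∧ ¬p ∣ ij.2.choose ij.1 ∧
      Even ij.1 ∧ Even ij.2} = {ij ∈ nonzeroEntries p (p ^ h) | Even ij.1 ∧ Even ij.2} := by
    rw [nonzeroEntries, filter_filter]
    refine filter_congr fun ij _ ↦ ?_
    exact and_iff_right_of_imp fun hij ↦ le_of_not_dvd_choose hij.1
  rw [drop_le]
  have one_pow_p : (1 : ℤ) ^ p = 1 := one_pow p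
  have neg_one_pow_p : (-1 : ℤ) ^ p = -1 := hodd.neg_one_pow
  obtain ⟨m, rfl⟩ := hodd
  have four_mul_card := four_mul_card_nonzeroEntries_even_and_even (R := ℤ) (2 * m + 1)
    ((2 * m + 1) ^ h)
  simp only [pascalSum_prime_pow hp, one_pow_p, neg_one_pow_p, pascalSum_self_one_one hp,
    pascalSum_self_one_neg_one hp, pascalSum_self_neg_one_left hp, one_pow, neg_one_sq, mul_pow]
    at four_mul_card
  refine (Nat.div_eq_of_eq_mul_left (by positivity) ?_).symm
  zify
  rw [show (2 * m + 1 + 1 : ℤ) = 2 * (m + 1) by ring, mul_pow]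
  linear_combination -2 ^ h * four_mul_card
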